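/- arXiv:1004.0151 — 2 statements merged into one kernel-verified Lean document; each statement's English description precedes it below -/
import Mathlib

section
/- Let a > 0 be real and λ ∈ ℂ ∖ [0,∞). Then the Lebesgue integral ∫₀^∞ sin²(ax)/(x² − λ) dx converges and equals (iπ/(4√λ)) (1 − e^{2ia√λ}). -/
open MeasureTheory Filter

/-- The branch of the complex square root with positive imaginary part
(for `z ∉ [0,∞)`): `√z = i · (−z)^{1/2}` where `(−z)^{1/2}` is the principal root. -/
noncomputable def sqrtUpper (z : ℂ) : ℂ := Complex.I * (-z) ^ ((1 : ℂ) / 2)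

/-! Write `κ = √λ`, so that `Im κ > 0`. The function `t ↦ e^{iκ|t|}` is, up to a constant, the
fundamental solution of `-d²/dx² - κ²`: its Fourier transform, computed on the two half-lines, is
`-2iκ / (s² - κ²)`. Both are integrable, so Fourier inversion evaluates
`∫ e^{ibx} / (x² - κ²) dx = (iπ/κ) e^{iκ|b|}` over the line, whose even part gives the integral of
`cos (b x) / (x² - κ²)` over the half-line. The cases `b = 0` and `b = 2a` combine through
`sin² (a x) = (1 - cos (2 a x)) / 2`. -/

open Complex Set

section Denominator

variable {κ : ℂ}

lemma ofReal_sq_sub_sq_ne_zero (hκ : κ.im ≠ 0) (x : ℝ) : (x : ℂ) ^ 2 - κ ^ 2 ≠ 0 := by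
  rw [sq_sub_sq]
  refine mul_ne_zero (fun h ↦ hκ ?_) (fun h ↦ hκ ?_)
  · simpa using congrArg im h
  · simpa using congrArg im h

lemma inv_ofReal_sq_sub_isBigO_cocompact (z : ℂ) :
    (fun x : ℝ ↦ ((x : ℂ) ^ 2 - z)⁻¹) =O[cocompact ℝ] fun x : ℝ ↦ (1 + x ^ 2)⁻¹ := by
  have norm_sq_atTop : Tendsto (fun x : ℝ ↦ ‖x‖ ^ 2) (cocompact ℝ) atTop :=
    (tendsto_pow_atTop two_ne_zero).comp (tendsto_norm_cocompact_atTop (E := ℝ))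
  refine .of_bound 2 ?_
  filter_upwards [norm_sq_atTop.eventually_ge_atTop (1 + 2 * ‖z‖)] with x hx
  rw [Real.norm_eq_abs, sq_abs] at hx
  have norm_sq : ‖(x : ℂ) ^ 2‖ = x ^ 2 := by simp
  have lower_bound : x ^ 2 - ‖z‖ ≤ ‖(x : ℂ) ^ 2 - z‖ :=
    norm_sq ▸ norm_sub_norm_le ((x : ℂ) ^ 2) z
  rw [norm_inv, norm_inv, Real.norm_of_nonneg (by positivity), ← div_eq_mul_inv,
    inv_le_comm₀ (by linarith [norm_nonneg z]) (by positivity), inv_div]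
  linarith

lemma integrable_inv_ofReal_sq_sub_sq (hκ : κ.im ≠ 0) :
    Integrable fun x : ℝ ↦ ((x : ℂ) ^ 2 - κ ^ 2)⁻¹ := by
  have hcont : Continuous fun x : ℝ ↦ ((x : ℂ) ^ 2 - κ ^ 2)⁻¹ :=
    Continuous.inv₀ (by fun_prop) (ofReal_sq_sub_sq_ne_zero hκ)
  exact hcont.locallyIntegrable.integrable_of_isBigO_cocompact
    (inv_ofReal_sq_sub_isBigO_cocompact _) (integrable_inv_one_add_sq.integrableAtFilter _)

end Denominator

section FourierTransform

lemma exp_mul_exp_abs_eqOn_Iic (κ : ℂ) (s : ℝ) :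
    EqOn (fun t : ℝ ↦ exp (I * (s - κ) * t)) (fun t ↦ exp (I * s * t) * exp (I * κ * |t|))
      (Iic 0) := by
  intro t ht
  simp only [← exp_add, abs_of_nonpos (mem_Iic.1 ht), ofReal_neg]
  ring_nf

lemma exp_mul_exp_abs_eqOn_Ioi (κ : ℂ) (s : ℝ) :
    EqOn (fun t : ℝ ↦ exp (I * (s + κ) * t)) (fun t ↦ exp (I * s * t) * exp (I * κ * |t|))
      (Ioi 0) := by
  intro t ht
  simp only [← exp_add, abs_of_pos (mem_Ioi.1 ht)]
  ring_nf

variable {κ : ℂ}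

lemma integrableOn_Iic_exp_mul_exp_abs (hκ : 0 < κ.im) (s : ℝ) :
    IntegrableOn (fun t : ℝ ↦ exp (I * s * t) * exp (I * κ * |t|)) (Iic 0) :=
  (integrableOn_exp_mul_complex_Iic (by simpa using hκ) 0).congr_fun
    (exp_mul_exp_abs_eqOn_Iic κ s) measurableSet_Iic

lemma integrableOn_Ioi_exp_mul_exp_abs (hκ : 0 < κ.im) (s : ℝ) :
    IntegrableOn (fun t : ℝ ↦ exp (I * s * t) * exp (I * κ * |t|)) (Ioi 0) :=
  (integrableOn_exp_mul_complex_Ioi (by simpa using hκ) 0).congr_fun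
    (exp_mul_exp_abs_eqOn_Ioi κ s) measurableSet_Ioi

lemma integrable_exp_abs (hκ : 0 < κ.im) : Integrable fun t : ℝ ↦ exp (I * κ * |t|) := by
  rw [← integrableOn_univ, ← Iic_union_Ioi (a := (0 : ℝ))]
  simpa using (integrableOn_Iic_exp_mul_exp_abs hκ 0).union (integrableOn_Ioi_exp_mul_exp_abs hκ 0)

lemma integral_exp_mul_exp_abs (hκ : 0 < κ.im) (s : ℝ) :
    ∫ t : ℝ, exp (I * s * t) * exp (I * κ * |t|) = -2 * I * κ * ((s : ℂ) ^ 2 - κ ^ 2)⁻¹ := by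
  have left_half : ∫ t in Iic (0 : ℝ), exp (I * s * t) * exp (I * κ * |t|)
      = 1 / (I * (s - κ)) := by
    rw [← setIntegral_congr_fun measurableSet_Iic (exp_mul_exp_abs_eqOn_Iic κ s),
      integral_exp_mul_complex_Iic (by simpa using hκ)]
    simp
  have right_half : ∫ t in Ioi (0 : ℝ), exp (I * s * t) * exp (I * κ * |t|)
      = -1 / (I * (s + κ)) := by
    rw [← setIntegral_congr_fun measurableSet_Ioi (exp_mul_exp_abs_eqOn_Ioi κ s),
      integral_exp_mul_complex_Ioi (by simpa using hκ)]
    simp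
  rw [← intervalIntegral.integral_Iic_add_Ioi (integrableOn_Iic_exp_mul_exp_abs hκ s)
    (integrableOn_Ioi_exp_mul_exp_abs hκ s), left_half, right_half]
  have hne := ofReal_sq_sub_sq_ne_zero hκ.ne' s
  rw [sq_sub_sq] at hne ⊢
  have hadd := left_ne_zero_of_mul hne
  have hsub := right_ne_zero_of_mul hne
  field_simp
  linear_combination 2 * κ * I_sq

open FourierTransform

lemma fourier_exp_abs (hκ : 0 < κ.im) :
    𝓕 (fun t : ℝ ↦ exp (I * κ * |t|)) =
      fun ξ : ℝ ↦ -2 * I * κ * (((2 * Real.pi * ξ : ℝ) : ℂ) ^ 2 - κ ^ 2)⁻¹ := by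
  ext ξ
  have key := integral_exp_mul_exp_abs hκ (-(2 * Real.pi * ξ))
  rw [ofReal_neg, neg_sq] at key
  rw [Real.fourier_eq', ← key]
  congr! 3 with t
  simp only [neg_mul, RCLike.inner_apply, conj_trivial, ofReal_neg, ofReal_mul, ofReal_ofNat]
  ring_nf

lemma fourierInv_fourier_exp_abs (hκ : 0 < κ.im) (b : ℝ) :
    𝓕⁻ (𝓕 fun t : ℝ ↦ exp (I * κ * |t|)) b = exp (I * κ * |b|) := by
  have hfourier : Integrable (𝓕 fun t : ℝ ↦ exp (I * κ * |t|)) := by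
    rw [fourier_exp_abs hκ]
    exact ((integrable_inv_ofReal_sq_sub_sq hκ.ne').comp_mul_left'
      Real.two_pi_pos.ne').const_mul _
  rw [Continuous.fourierInv_fourier_eq (by fun_prop) (integrable_exp_abs hκ) hfourier]

lemma integral_exp_mul_inv_ofReal_sq_sub_sq (hκ : 0 < κ.im) (b : ℝ) :
    ∫ x : ℝ, exp (I * b * x) * ((x : ℂ) ^ 2 - κ ^ 2)⁻¹ = I * Real.pi / κ * exp (I * κ * |b|) := by
  have hκ0 : κ ≠ 0 := by rintro rfl; simp at hκ
  set g : ℝ → ℂ := fun x ↦ exp (I * b * x) * ((x : ℂ) ^ 2 - κ ^ 2)⁻¹ with hg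
  have inversion : exp (I * κ * |b|) = -2 * I * κ * ∫ ξ : ℝ, g (2 * Real.pi * ξ) := by
    rw [← fourierInv_fourier_exp_abs hκ b, fourier_exp_abs hκ, Real.fourierInv_eq',
      ← integral_const_mul]
    congr! 2
    simp only [hg, smul_eq_mul, RCLike.inner_apply, conj_trivial]
    push_cast
    ring_nf
  rw [inversion, Measure.integral_comp_mul_left, abs_of_pos (by positivity), real_smul]
  push_cast
  field_simp
  linear_combination (∫ x, g x) * I_sq

end FourierTransform

lemma integral_Ioi_add_comp_neg {E : Type*} [NormedAddCommGroup E] [NormedSpace ℝ E] {f : ℝ → E}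
    (hf : Integrable f) : ∫ x in Ioi (0 : ℝ), (f x + f (-x)) = ∫ x, f x := by
  rw [integral_add hf.integrableOn hf.comp_neg.integrableOn, integral_comp_neg_Ioi, neg_zero,
    add_comm, intervalIntegral.integral_Iic_add_Ioi hf.integrableOn hf.integrableOn]

section HalfLine

variable {κ : ℂ}

lemma integrable_cos_mul_inv_ofReal_sq_sub_sq (hκ : κ.im ≠ 0) (b : ℝ) :
    Integrable fun x : ℝ ↦ (Real.cos (b * x) : ℂ) * ((x : ℂ) ^ 2 - κ ^ 2)⁻¹ :=
  (integrable_inv_ofReal_sq_sub_sq hκ).bdd_mul (c := 1)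
    (Continuous.aestronglyMeasurable (by fun_prop))
    (.of_forall fun x ↦ (norm_real _).trans_le (Real.abs_cos_le_one (b * x)))

lemma integral_Ioi_cos_mul_inv_ofReal_sq_sub_sq (hκ : 0 < κ.im) (b : ℝ) :
    ∫ x in Ioi (0 : ℝ), (Real.cos (b * x) : ℂ) * ((x : ℂ) ^ 2 - κ ^ 2)⁻¹ =
      I * Real.pi / (2 * κ) * exp (I * κ * |b|) := by
  set g : ℝ → ℂ := fun x ↦ exp (I * b * x) * ((x : ℂ) ^ 2 - κ ^ 2)⁻¹ with hg
  have hg_int : Integrable g := (integrable_inv_ofReal_sq_sub_sq hκ.ne').bdd_mul (c := 1)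
    (Continuous.aestronglyMeasurable (by fun_prop)) (.of_forall fun x ↦ by simp [norm_exp])
  have euler (x : ℝ) : (Real.cos (b * x) : ℂ) * ((x : ℂ) ^ 2 - κ ^ 2)⁻¹ = (g x + g (-x)) / 2 := by
    simp only [hg, ofReal_cos, Complex.cos]
    push_cast
    ring_nf
  simp_rw [euler]
  rw [integral_div, integral_Ioi_add_comp_neg hg_int, integral_exp_mul_inv_ofReal_sq_sub_sq hκ]
  ring

-- The constant term is written as `cos (0 * x)`, so that it too is a cosine integral.
lemma sin_sq_mul_eq_half_sub (a x : ℝ) (w : ℂ) :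
    (Real.sin (a * x) : ℂ) ^ 2 * w =
      (Real.cos (0 * x) * w - Real.cos (2 * a * x) * w) / 2 := by
  rw [← ofReal_pow, Real.sin_sq_eq_half_sub, ← mul_assoc, zero_mul, Real.cos_zero]
  push_cast
  ring

lemma integrable_sin_sq_mul_inv_ofReal_sq_sub_sq (hκ : κ.im ≠ 0) (a : ℝ) :
    Integrable fun x : ℝ ↦ (Real.sin (a * x) : ℂ) ^ 2 * ((x : ℂ) ^ 2 - κ ^ 2)⁻¹ := by
  simp only [sin_sq_mul_eq_half_sub]
  exact ((integrable_cos_mul_inv_ofReal_sq_sub_sq hκ 0).sub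
    (integrable_cos_mul_inv_ofReal_sq_sub_sq hκ (2 * a))).div_const 2

lemma integral_Ioi_sin_sq_mul_inv_ofReal_sq_sub_sq (hκ : 0 < κ.im) (a : ℝ) :
    ∫ x in Ioi (0 : ℝ), (Real.sin (a * x) : ℂ) ^ 2 * ((x : ℂ) ^ 2 - κ ^ 2)⁻¹ =
      I * Real.pi / (4 * κ) * (1 - exp (2 * I * |a| * κ)) := by
  have hcos (b : ℝ) := (integrable_cos_mul_inv_ofReal_sq_sub_sq hκ.ne' b).integrableOn (s := Ioi 0)
  simp only [sin_sq_mul_eq_half_sub]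
  rw [integral_div, integral_sub (hcos 0) (hcos (2 * a)),
    integral_Ioi_cos_mul_inv_ofReal_sq_sub_sq hκ, integral_Ioi_cos_mul_inv_ofReal_sq_sub_sq hκ,
    abs_zero, ofReal_zero, mul_zero, exp_zero, abs_mul, abs_two]
  push_cast
  ring_nf

end HalfLine

lemma sqrtUpper_sq (z : ℂ) : sqrtUpper z ^ 2 = z := by
  rw [sqrtUpper, mul_pow, I_sq, one_div, cpow_ofNat_inv_pow, neg_one_mul, neg_neg]

lemma im_sqrtUpper (z : ℂ) : (sqrtUpper z).im = √((‖z‖ - z.re) / 2) := by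
  rw [sqrtUpper, I_mul_im, one_div, cpow_inv_two_re, norm_neg, neg_re, sub_eq_add_neg]

open scoped ComplexOrder in
lemma im_sqrtUpper_pos {z : ℂ} : 0 < (sqrtUpper z).im ↔ ¬0 ≤ z := by
  rw [im_sqrtUpper, Real.sqrt_pos, div_pos_iff_of_pos_right two_pos, sub_pos, ← re_eq_norm]
  exact (re_le_norm z).lt_iff_ne

/-- For real `a > 0` and `λ ∉ [0,∞)`, the Lebesgue integral
`∫₀^∞ sin²(ax)/(x² − λ) dx` converges and equals `(iπ/(4√λ))(1 − e^{2ia√λ})`. -/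
theorem stmt5 (a : ℝ) (ha : 0 < a) (lam : ℂ) (hlam : ∀ t : ℝ, 0 ≤ t → lam ≠ (t : ℂ)) :
    IntegrableOn (fun x : ℝ => (Real.sin (a * x) : ℂ) ^ 2 * ((x : ℂ) ^ 2 - lam)⁻¹)
      (Set.Ioi 0) ∧
    ∫ x in Set.Ioi (0 : ℝ), (Real.sin (a * x) : ℂ) ^ 2 * ((x : ℂ) ^ 2 - lam)⁻¹
      = Complex.I * (Real.pi : ℂ) / (4 * sqrtUpper lam) *
          (1 - Complex.exp (2 * Complex.I * (a : ℂ) * sqrtUpper lam)) := by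
  have him : 0 < (sqrtUpper lam).im := im_sqrtUpper_pos.2 fun h ↦
    hlam lam.re (nonneg_iff.1 h).1 (eq_re_of_ofReal_le h)
  have hint := integrable_sin_sq_mul_inv_ofReal_sq_sub_sq him.ne' a
  have hval := integral_Ioi_sin_sq_mul_inv_ofReal_sq_sub_sq him a
  rw [sqrtUpper_sq] at hint hval
  rw [abs_of_pos ha] at hval
  exact ⟨hint.integrableOn, hval⟩
end

section
/- Let b > 0 and τ > 0 be real and set z = τ/(2πb). Then the Lebesgue integral ∫₀^∞ log(1 − e^{−τv}) / (1 + b²v²) dv converges and −(b/π) ∫₀^∞ log(1 − e^{−τv}) / (1 + b²v²) dv = log Γ(z) − (z − 1/2) log z + z − (1/2) log(2π). (The left side is, up to sign, the relative Dedekind eta function log η(τ; −Δ^{g_R}, −Δ⁰) = ∫₀^∞ log(1 − e^{−τv}) e(v) dv for the delta-perturbed Laplacian on the real line, whose relative spectral measure is e(v) = −b/(π(1 + b²v²)) with b = 1/(π g_R).) -/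
open MeasureTheory

/-!
Both sides equal Binet's integral `∫₀^∞ e^{-zu} K(u) du`, `K(u) = (1/(eᵘ - 1) - 1/u + 1/2)/u`.

*Left side.* Put `w = bv`, expand `-log (1 - e^{-2πzw})` as a power series and substitute
`u = 2πnw` in the `n`-th term. The `n`-th integral becomes a multiple of the Laplace transform of
`2/(u² + (2πn)²)`, and these functions are the partial fractions of `K`, by the Mittag-Leffler
expansion of the cotangent.

*Right side (Binet's first formula).* The remainder in Stirling's formula and Binet's integral both
tend to `0` along `z + ℕ`, and they satisfy the same first-order difference equation: for Binet's
integral this comes from `(1 - e^{-u}) K(u) = ∫₀¹ (1/2 - x) e^{-xu} dx` and Fubini's theorem.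
-/

section TermwiseIntegration

open Filter

variable {α ι E : Type*} [MeasurableSpace α] {μ : Measure α} [Countable ι] [NormedAddCommGroup E]
  {F : ι → α → E} {f : α → E}

theorem integrable_of_hasSum_of_summable_integral_norm (hF : ∀ i, Integrable (F i) μ)
    (hsum : Summable fun i => ∫ a, ‖F i a‖ ∂μ) (hf : ∀ᵐ a ∂μ, HasSum (F · a) (f a)) :
    Integrable f μ := by
  refine ⟨aestronglyMeasurable_of_tendsto_ae atTop
    (fun s : Finset ι => s.aestronglyMeasurable_fun_sum fun i _ => (hF i).1) hf, ?_⟩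
  calc ∫⁻ a, ‖f a‖ₑ ∂μ
      ≤ ∫⁻ a, ∑' i, ‖F i a‖ₑ ∂μ := lintegral_mono_ae <| by
        filter_upwards [hf] with a ha using ha.tsum_eq ▸ enorm_tsum_le_tsum_enorm
    _ = ∑' i, ENNReal.ofReal (∫ a, ‖F i a‖ ∂μ) := by
        rw [lintegral_tsum fun i => (hF i).1.enorm]
        simp only [ofReal_integral_norm_eq_lintegral_enorm (hF _)]
    _ < ⊤ := hsum.tsum_ofReal_lt_top

theorem hasSum_integral_of_hasSum_of_summable_integral_norm [NormedSpace ℝ E]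
    (hF : ∀ i, Integrable (F i) μ) (hsum : Summable fun i => ∫ a, ‖F i a‖ ∂μ)
    (hf : ∀ᵐ a ∂μ, HasSum (F · a) (f a)) :
    HasSum (fun i => ∫ a, F i a ∂μ) (∫ a, f a ∂μ) := by
  rw [← integral_congr_ae (hf.mono fun a ha => ha.tsum_eq)]
  exact hasSum_integral_of_summable_integral_norm hF hsum

end TermwiseIntegration

section DifferenceEquation

open Filter Topology

theorem eq_of_sub_succ_eq_of_tendsto {G : Type*} [AddCommGroup G] [TopologicalSpace G]
    [IsTopologicalAddGroup G] [T2Space G] {f g : ℕ → G} {l : G}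
    (h : ∀ n, f n - f (n + 1) = g n - g (n + 1)) (hf : Tendsto f atTop (𝓝 l))
    (hg : Tendsto g atTop (𝓝 l)) : f 0 = g 0 := by
  have hconst (n : ℕ) : f n - g n = f 0 - g 0 := by
    induction n with
    | zero => rfl
    | succ n ih => rw [← ih, sub_eq_sub_iff_sub_eq_sub, ← neg_sub (f n), h, neg_sub]
  have hlim : Tendsto (fun _ : ℕ => f 0 - g 0) atTop (𝓝 0) := by
    simpa only [hconst, sub_self] using hf.sub hg
  exact sub_eq_zero.mp (tendsto_nhds_unique tendsto_const_nhds hlim)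

end DifferenceEquation

noncomputable section

open Real Set Filter Topology

section StirlingRemainder

/-- The remainder `log Γ(z) - ((z - 1/2) log z - z + (1/2) log 2π)` in Stirling's formula, often
called Binet's function. -/
def stirlingRemainder (z : ℝ) : ℝ :=
  log (Gamma z) - (z - 1 / 2) * log z + z - (1 / 2) * log (2 * π)

variable {z : ℝ}

theorem log_Gamma_add_one (hz : 0 < z) : log (Gamma (z + 1)) = log (Gamma z) + log z := by
  rw [Gamma_add_one hz.ne', log_mul hz.ne' (Gamma_pos_of_pos hz).ne', add_comm]

theorem stirlingRemainder_sub_stirlingRemainder_add_one (hz : 0 < z) :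
    stirlingRemainder z - stirlingRemainder (z + 1) =
      (z + 1 / 2) * (log (z + 1) - log z) - 1 := by
  rw [stirlingRemainder, stirlingRemainder, log_Gamma_add_one hz]
  ring

theorem stirlingRemainder_add_natCast_add_one (hz : 0 < z) {n : ℕ} (hn : n ≠ 0) :
    stirlingRemainder (z + (n + 1 : ℕ)) =
      (log (Gamma z) - BohrMollerup.logGammaSeq z n) +
      (log (Stirling.stirlingSeq n) - log √π) +
      (z + 1 - n * log (1 + (z + 1) / n)) - (z + 1 / 2) * log (1 + (z + 1) / n) := by
  have hn' : (0 : ℝ) < n := by positivity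
  have hGamma : log (Gamma (z + (n + 1 : ℕ))) =
      log (Gamma z) + ∑ m ∈ Finset.range (n + 1), log (z + m) :=
    BohrMollerup.f_add_nat_eq (f := fun x => log (Gamma x)) log_Gamma_add_one hz (n + 1)
  have hlog : log (1 + (z + 1) / n) = log (z + (n + 1 : ℕ)) - log n := by
    rw [← log_div (by positivity) hn'.ne']
    congr 1
    push_cast
    field_simp
    ring
  rw [stirlingRemainder, hGamma, BohrMollerup.logGammaSeq, Stirling.log_stirlingSeq_formula, hlog,
    log_div hn'.ne' (exp_pos 1).ne', log_exp, log_mul two_ne_zero hn'.ne',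
    log_mul two_ne_zero pi_ne_zero, log_sqrt pi_pos.le]
  push_cast
  ring

theorem tendsto_stirlingRemainder_add_natCast (hz : 0 < z) :
    Tendsto (fun n : ℕ => stirlingRemainder (z + n)) atTop (𝓝 0) := by
  rw [← tendsto_add_atTop_iff_nat 1]
  have hGamma := (BohrMollerup.tendsto_log_gamma hz).const_sub (log (Gamma z))
  have hFactorial := (Stirling.tendsto_stirlingSeq_sqrt_pi.log
    (sqrt_pos.mpr pi_pos).ne').sub_const (log √π)
  have hMulLog : Tendsto (fun n : ℕ => z + 1 - n * log (1 + (z + 1) / n)) atTop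
      (𝓝 (z + 1 - (z + 1))) :=
    ((tendsto_mul_log_one_add_div_atTop (z + 1)).comp tendsto_natCast_atTop_atTop).const_sub _
  have hLog : Tendsto (fun n : ℕ => log (1 + (z + 1) / n)) atTop (𝓝 (log (1 + 0))) :=
    ((tendsto_const_div_atTop_nhds_zero_nat (z + 1)).const_add 1).log (by norm_num)
  have hlim := ((hGamma.add hFactorial).add hMulLog).sub (hLog.const_mul (z + 1 / 2))
  simp only [sub_self, add_zero, log_one, mul_zero] at hlim
  refine hlim.congr' ?_
  filter_upwards [eventually_ne_atTop 0] with n hn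
  exact (stirlingRemainder_add_natCast_add_one hz hn).symm

end StirlingRemainder

section LaplaceIntegral

/-- The Laplace transform of `f : ℝ → ℝ` at a real point `z`. -/
def laplaceIntegral (f : ℝ → ℝ) (z : ℝ) : ℝ := ∫ u in Ioi 0, exp (-(z * u)) * f u

variable {f : ℝ → ℝ} {z C : ℝ}

theorem integrableOn_exp_neg_mul_Ioi (hz : 0 < z) :
    IntegrableOn (fun u => exp (-(z * u))) (Ioi 0) := by
  simpa only [neg_mul] using exp_neg_integrableOn_Ioi 0 hz

theorem integral_exp_neg_mul_Ioi (hz : 0 < z) : ∫ u in Ioi 0, exp (-(z * u)) = 1 / z := by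
  simpa using integral_exp_mul_Ioi (neg_lt_zero.mpr hz) 0

theorem integrableOn_exp_neg_mul_mul_of_bounded (hz : 0 < z)
    (hf : AEStronglyMeasurable f (volume.restrict (Ioi 0))) (hC : ∀ u > 0, ‖f u‖ ≤ C) :
    IntegrableOn (fun u => exp (-(z * u)) * f u) (Ioi 0) :=
  (integrableOn_exp_neg_mul_Ioi hz).mul_bdd hf (ae_restrict_of_forall_mem measurableSet_Ioi hC)

theorem norm_laplaceIntegral_le (hz : 0 < z) (hC : ∀ u > 0, ‖f u‖ ≤ C) :
    ‖laplaceIntegral f z‖ ≤ C / z :=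
  calc ‖laplaceIntegral f z‖
      ≤ ∫ u in Ioi 0, exp (-(z * u)) * C := by
        refine norm_integral_le_of_norm_le ((integrableOn_exp_neg_mul_Ioi hz).mul_const C)
          (ae_restrict_of_forall_mem measurableSet_Ioi fun u hu => ?_)
        rw [norm_mul, norm_of_nonneg (exp_pos _).le]
        exact mul_le_mul_of_nonneg_left (hC u hu) (exp_pos _).le
    _ = C / z := by
        rw [integral_mul_const, integral_exp_neg_mul_Ioi hz, one_div_mul_eq_div]

theorem laplaceIntegral_sub_laplaceIntegral_add {a : ℝ}
    (hfz : IntegrableOn (fun u => exp (-(z * u)) * f u) (Ioi 0))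
    (hfza : IntegrableOn (fun u => exp (-((z + a) * u)) * f u) (Ioi 0)) :
    laplaceIntegral f z - laplaceIntegral f (z + a) =
      laplaceIntegral (fun u => (1 - exp (-(a * u))) * f u) z := by
  simp only [laplaceIntegral]
  rw [← integral_sub hfz hfza]
  congr 1 with u
  rw [show -((z + a) * u) = -(z * u) + -(a * u) by ring, exp_add]
  ring

theorem laplaceIntegral_integral_mul_exp_neg {ν : Measure ℝ} [SFinite ν] {φ : ℝ → ℝ}
    (hν : ∀ᵐ x ∂ν, 0 ≤ x) (hφ : Integrable φ ν) (hz : 0 < z) :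
    laplaceIntegral (fun u => ∫ x, φ x * exp (-(x * u)) ∂ν) z = ∫ x, φ x / (x + z) ∂ν := by
  have hint : Integrable (Function.uncurry fun u x => exp (-(z * u)) * (φ x * exp (-(x * u))))
      ((volume.restrict (Ioi 0)).prod ν) := by
    refine ((integrableOn_exp_neg_mul_Ioi hz).mul_prod hφ).mono ?_ ?_
    · have hφ' : AEStronglyMeasurable (fun p : ℝ × ℝ => φ p.2)
          ((volume.restrict (Ioi 0)).prod ν) := hφ.1.comp_snd
      exact (by fun_prop : Continuous fun p : ℝ × ℝ => exp (-(z * p.1))).aestronglyMeasurable.mul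
        (hφ'.mul
          (by fun_prop : Continuous fun p : ℝ × ℝ => exp (-(p.2 * p.1))).aestronglyMeasurable)
    · filter_upwards [Measure.quasiMeasurePreserving_fst.ae (ae_restrict_mem measurableSet_Ioi),
        Measure.quasiMeasurePreserving_snd.ae hν] with p hu hx
      have hexp : exp (-(p.2 * p.1)) ≤ 1 :=
        exp_le_one_iff.mpr (neg_nonpos.mpr (mul_nonneg hx (mem_Ioi.mp hu).le))
      simp only [Function.uncurry, norm_mul, norm_of_nonneg (exp_pos _).le]
      gcongr
      exact mul_le_of_le_one_right (norm_nonneg _) hexp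
  simp only [laplaceIntegral, ← integral_const_mul]
  rw [integral_integral_swap hint]
  refine integral_congr_ae (hν.mono fun x hx => ?_)
  have hexp (u : ℝ) : exp (-(z * u)) * (φ x * exp (-(x * u))) = φ x * exp (-((x + z) * u)) := by
    rw [show -((x + z) * u) = -(z * u) + -(x * u) by ring, exp_add]
    ring
  simp only [hexp]
  rw [integral_const_mul, integral_exp_neg_mul_Ioi (by linarith), mul_one_div]

end LaplaceIntegral

section BinetKernel

/-- The kernel of Binet's first formula for `log Γ`. Its value at `0` is the junk value `0`; the
continuous extension takes the value `1/12` there. -/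
def binetKernel (u : ℝ) : ℝ := (1 / (exp u - 1) - 1 / u + 1 / 2) / u

/-- The partial fraction of `binetKernel` with poles at `± 2πi(n + 1)`. -/
def binetTerm (n : ℕ) (u : ℝ) : ℝ := 2 / (u ^ 2 + (2 * π * (n + 1)) ^ 2)

theorem div_two_pi_I_mem_integerComplement {w : ℂ} (hw : Complex.exp w ≠ 1) :
    w / (2 * π * Complex.I) ∈ Complex.integerComplement := by
  rintro ⟨k, hk⟩
  exact hw (Complex.exp_eq_one_iff.mpr ⟨k, (div_eq_iff Complex.two_pi_I_ne_zero).mp hk.symm⟩)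

theorem hasSum_partialFractions_one_div_exp_sub_one {w : ℂ} (hw : Complex.exp w ≠ 1) :
    HasSum (fun n : ℕ => 2 * w / (w ^ 2 + (2 * π * (n + 1)) ^ 2))
      (1 / (Complex.exp w - 1) - 1 / w + 1 / 2) := by
  set x := w / (2 * π * Complex.I) with hx
  have hxZ : x ∈ Complex.integerComplement := div_two_pi_I_mem_integerComplement hw
  have hwx : 2 * π * Complex.I * x = w := mul_div_cancel₀ w Complex.two_pi_I_ne_zero
  have hcot : HasSum (cotTerm x) (π * Complex.cot (π * x) - 1 / x) := by
    rw [cot_series_rep' hxZ]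
    exact (summable_cotTerm hxZ).hasSum
  convert! hcot.mul_left (2 * π * Complex.I)⁻¹ using 1
  · ext n
    have hden : (x + (n + 1)) * (x - (n + 1)) =
        -(w ^ 2 + (2 * π * (n + 1)) ^ 2) / (2 * π) ^ 2 := by
      rw [hx]
      field_simp
      ring_nf
      rw [Complex.I_sq]
      ring
    rw [cotTerm_identity hxZ, hden, hx]
    field_simp
    rw [Complex.I_sq]
    ring
  · rw [Complex.cot_pi_eq_exp_ratio, hwx, hx]
    field_simp
    simp only [Complex.I_sq]
    ring

theorem hasSum_binetTerm {u : ℝ} (hu : u ≠ 0) :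
    HasSum (fun n => binetTerm n u) (binetKernel u) := by
  have hexp : Complex.exp u ≠ 1 := mod_cast (exp_eq_one_iff u).not.mpr hu
  rw [← Complex.hasSum_ofReal]
  convert! (hasSum_partialFractions_one_div_exp_sub_one hexp).div_const (u : ℂ) using 1
  · ext n
    have hu' : (u : ℂ) ≠ 0 := mod_cast hu
    push_cast [binetTerm]
    field_simp
  · push_cast [binetKernel]
    rfl

theorem binetTerm_pos (n : ℕ) (u : ℝ) : 0 < binetTerm n u := by
  unfold binetTerm
  positivity

theorem binetTerm_le_binetTerm_zero (n : ℕ) (u : ℝ) : binetTerm n u ≤ binetTerm n 0 := by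
  refine div_le_div_of_nonneg_left zero_le_two (by positivity) ?_
  gcongr ?_ + _
  simpa using sq_nonneg u

theorem continuous_binetTerm (n : ℕ) : Continuous (binetTerm n) := by
  unfold binetTerm
  exact continuous_const.div (by fun_prop) fun u => by positivity

theorem hasSum_binetTerm_zero : HasSum (fun n => binetTerm n 0) (1 / 12) := by
  have h := ((hasSum_nat_add_iff' 1).mpr hasSum_zeta_two).mul_left (1 / (2 * π ^ 2))
  convert! h using 1
  · ext n
    rw [binetTerm]
    push_cast
    field_simp
    norm_num
  · rw [Finset.sum_range_one]
    field_simp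
    ring

theorem norm_binetTerm_le (n : ℕ) (u : ℝ) : ‖binetTerm n u‖ ≤ binetTerm n 0 := by
  rw [norm_of_nonneg (binetTerm_pos n u).le]
  exact binetTerm_le_binetTerm_zero n u

theorem norm_binetKernel_le {u : ℝ} (hu : u ≠ 0) : ‖binetKernel u‖ ≤ 1 / 12 := by
  rw [norm_of_nonneg ((hasSum_binetTerm hu).nonneg fun n => (binetTerm_pos n u).le)]
  exact hasSum_le (fun n => binetTerm_le_binetTerm_zero n u) (hasSum_binetTerm hu)
    hasSum_binetTerm_zero

theorem measurable_binetKernel : Measurable binetKernel := by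
  unfold binetKernel
  fun_prop

theorem one_sub_exp_neg_mul_binetKernel {u : ℝ} (hu : u ≠ 0) :
    (1 - exp (-u)) * binetKernel u = ∫ x in (0 : ℝ)..1, (1 / 2 - x) * exp (-(x * u)) := by
  have hderiv (x : ℝ) : HasDerivAt (fun x => exp (-(x * u)) * ((x - 1 / 2) / u + 1 / u ^ 2))
      ((1 / 2 - x) * exp (-(x * u))) x := by
    have hexp : HasDerivAt (fun x => exp (-(x * u))) (exp (-(x * u)) * -u) x :=
      (hasDerivAt_mul_const u).neg.exp
    have hlin : HasDerivAt (fun x => (x - 1 / 2) / u + 1 / u ^ 2) (1 / u) x :=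
      (((hasDerivAt_id x).sub_const (1 / 2)).div_const u).add_const _
    convert! hexp.mul hlin using 1
    field_simp
    ring
  rw [intervalIntegral.integral_eq_sub_of_hasDerivAt (fun x _ => hderiv x)
    (Continuous.intervalIntegrable (by fun_prop) _ _)]
  have hexp : exp u - 1 ≠ 0 := sub_ne_zero.mpr ((exp_eq_one_iff u).not.mpr hu)
  simp only [binetKernel, one_mul, zero_mul, neg_zero, exp_zero, exp_neg]
  field_simp
  ring

end BinetKernel

section BinetFormula

variable {z : ℝ}

theorem integrableOn_exp_neg_mul_mul_binetTerm (hz : 0 < z) (n : ℕ) :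
    IntegrableOn (fun u => exp (-(z * u)) * binetTerm n u) (Ioi 0) :=
  integrableOn_exp_neg_mul_mul_of_bounded hz (continuous_binetTerm n).aestronglyMeasurable
    fun u _ => norm_binetTerm_le n u

theorem integrableOn_exp_neg_mul_mul_binetKernel (hz : 0 < z) :
    IntegrableOn (fun u => exp (-(z * u)) * binetKernel u) (Ioi 0) :=
  integrableOn_exp_neg_mul_mul_of_bounded hz measurable_binetKernel.aestronglyMeasurable
    fun _ hu => norm_binetKernel_le (ne_of_gt hu)

theorem summable_laplaceIntegral_binetTerm (hz : 0 < z) :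
    Summable fun n => laplaceIntegral (binetTerm n) z :=
  .of_norm_bounded (hasSum_binetTerm_zero.summable.div_const z) fun n =>
    norm_laplaceIntegral_le hz fun u _ => norm_binetTerm_le n u

theorem hasSum_laplaceIntegral_binetTerm (hz : 0 < z) :
    HasSum (fun n => laplaceIntegral (binetTerm n) z) (laplaceIntegral binetKernel z) := by
  have hnorm (n : ℕ) (u : ℝ) :
      ‖exp (-(z * u)) * binetTerm n u‖ = exp (-(z * u)) * binetTerm n u :=
    norm_of_nonneg (mul_pos (exp_pos _) (binetTerm_pos n u)).le
  refine hasSum_integral_of_hasSum_of_summable_integral_norm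
    (integrableOn_exp_neg_mul_mul_binetTerm hz) ?_
    (ae_restrict_of_forall_mem measurableSet_Ioi fun u hu =>
      (hasSum_binetTerm (ne_of_gt hu)).mul_left _)
  simp only [hnorm]
  exact summable_laplaceIntegral_binetTerm hz

theorem integral_half_sub_div_add (hz : 0 < z) :
    ∫ x in (0 : ℝ)..1, (1 / 2 - x) / (x + z) = (z + 1 / 2) * (log (z + 1) - log z) - 1 := by
  have hne {x : ℝ} (hx : x ∈ uIcc 0 1) : x + z ≠ 0 := by
    rw [uIcc_of_le zero_le_one] at hx
    linarith [hx.1]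
  have hderiv (x : ℝ) (hx : x ∈ uIcc 0 1) :
      HasDerivAt (fun x => (z + 1 / 2) * log (x + z) - x) ((1 / 2 - x) / (x + z)) x := by
    have hxz := hne hx
    convert! ((((hasDerivAt_id' x).add_const z).log hxz).const_mul (z + 1 / 2)).sub
      (hasDerivAt_id' x) using 1
    field_simp
    ring
  have hint : IntervalIntegrable (fun x => (1 / 2 - x) / (x + z)) volume 0 1 :=
    (ContinuousOn.div (by fun_prop) (by fun_prop) fun _ => hne).intervalIntegrable
  rw [intervalIntegral.integral_eq_sub_of_hasDerivAt hderiv hint, add_comm 1 z, zero_add]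
  ring

theorem laplaceIntegral_binetKernel_sub_add_one (hz : 0 < z) :
    laplaceIntegral binetKernel z - laplaceIntegral binetKernel (z + 1) =
      (z + 1 / 2) * (log (z + 1) - log z) - 1 := by
  have hz1 : 0 < z + 1 := by linarith
  calc laplaceIntegral binetKernel z - laplaceIntegral binetKernel (z + 1)
      = laplaceIntegral (fun u => (1 - exp (-(1 * u))) * binetKernel u) z :=
        laplaceIntegral_sub_laplaceIntegral_add (integrableOn_exp_neg_mul_mul_binetKernel hz)
          (integrableOn_exp_neg_mul_mul_binetKernel hz1)
    _ = laplaceIntegral (fun u => ∫ x in Ioc 0 1, (1 / 2 - x) * exp (-(x * u))) z := by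
        refine setIntegral_congr_fun measurableSet_Ioi fun u hu => ?_
        simp only [one_mul]
        rw [one_sub_exp_neg_mul_binetKernel (ne_of_gt hu),
          intervalIntegral.integral_of_le zero_le_one]
    _ = ∫ x in Ioc 0 1, (1 / 2 - x) / (x + z) :=
        laplaceIntegral_integral_mul_exp_neg
          (ae_restrict_of_forall_mem measurableSet_Ioc fun x hx => hx.1.le)
          (Continuous.integrableOn_Ioc (by fun_prop)) hz
    _ = (z + 1 / 2) * (log (z + 1) - log z) - 1 := by
        rw [← intervalIntegral.integral_of_le zero_le_one, integral_half_sub_div_add hz]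

theorem tendsto_laplaceIntegral_binetKernel :
    Tendsto (laplaceIntegral binetKernel) atTop (𝓝 0) := by
  refine squeeze_zero_norm' ?_ (tendsto_id.const_div_atTop (1 / 12))
  filter_upwards [eventually_gt_atTop 0] with z hz
  exact norm_laplaceIntegral_le hz fun u hu => norm_binetKernel_le (ne_of_gt hu)

theorem laplaceIntegral_binetKernel_eq_stirlingRemainder (hz : 0 < z) :
    laplaceIntegral binetKernel z = stirlingRemainder z := by
  have hrec (n : ℕ) : laplaceIntegral binetKernel (z + n) -
        laplaceIntegral binetKernel (z + (n + 1 : ℕ)) =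
      stirlingRemainder (z + n) - stirlingRemainder (z + (n + 1 : ℕ)) := by
    have hzn : 0 < z + n := by positivity
    rw [Nat.cast_add_one, ← add_assoc, laplaceIntegral_binetKernel_sub_add_one hzn,
      stirlingRemainder_sub_stirlingRemainder_add_one hzn]
  have hlim : Tendsto (fun n : ℕ => laplaceIntegral binetKernel (z + n)) atTop (𝓝 0) :=
    tendsto_laplaceIntegral_binetKernel.comp
      (tendsto_atTop_add_const_left _ z tendsto_natCast_atTop_atTop)
  simpa using eq_of_sub_succ_eq_of_tendsto hrec hlim (tendsto_stirlingRemainder_add_natCast hz)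

end BinetFormula

section LogIntegral

variable {z : ℝ}

/-- The `n`-th term of the expansion of `-log (1 - e^{-2πzw}) / (1 + w²)` in powers of
`e^{-2πzw}`. -/
def logSeriesTerm (z : ℝ) (n : ℕ) (w : ℝ) : ℝ :=
  exp (-(2 * π * z * w)) ^ (n + 1) / (n + 1) / (1 + w ^ 2)

theorem logSeriesTerm_nonneg (z : ℝ) (n : ℕ) (w : ℝ) : 0 ≤ logSeriesTerm z n w := by
  unfold logSeriesTerm
  positivity

theorem hasSum_logSeriesTerm (hz : 0 < z) {w : ℝ} (hw : 0 < w) :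
    HasSum (fun n => logSeriesTerm z n w)
      (-(log (1 - exp (-(2 * π * z * w))) / (1 + w ^ 2))) := by
  have hlt : |exp (-(2 * π * z * w))| < 1 := by
    rw [abs_exp, exp_lt_one_iff, neg_lt_zero]
    positivity
  rw [← neg_div]
  exact (hasSum_pow_div_log_of_abs_lt_one hlt).div_const _

theorem logSeriesTerm_eq (z : ℝ) (n : ℕ) (w : ℝ) :
    logSeriesTerm z n w = π * (2 * π * (n + 1)) *
      (exp (-(z * (2 * π * (n + 1) * w))) * binetTerm n (2 * π * (n + 1) * w)) := by
  have hexp : exp (-(2 * π * z * w)) ^ (n + 1) = exp (-(z * (2 * π * (n + 1) * w))) := by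
    rw [← exp_nat_mul]
    push_cast
    ring_nf
  have hden : (2 * π * (n + 1) * w) ^ 2 + (2 * π * (n + 1)) ^ 2 =
      (2 * π * (n + 1)) ^ 2 * (1 + w ^ 2) := by ring
  rw [logSeriesTerm, binetTerm, hexp, hden]
  field_simp

theorem integrableOn_logSeriesTerm (hz : 0 < z) (n : ℕ) :
    IntegrableOn (logSeriesTerm z n) (Ioi 0) := by
  have hc : 0 < 2 * π * (n + 1) := by positivity
  have hcomp := (integrableOn_Ioi_comp_mul_left_iff
    (fun u => exp (-(z * u)) * binetTerm n u) 0 hc).mpr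
    (by simpa only [mul_zero] using integrableOn_exp_neg_mul_mul_binetTerm hz n)
  rw [funext (logSeriesTerm_eq z n)]
  exact hcomp.const_mul _

theorem integral_logSeriesTerm (z : ℝ) (n : ℕ) :
    ∫ w in Ioi 0, logSeriesTerm z n w = π * laplaceIntegral (binetTerm n) z := by
  have hc : 0 < 2 * π * (n + 1) := by positivity
  have hcomp := integral_comp_mul_left_Ioi' (fun u => exp (-(z * u)) * binetTerm n u) 0 hc
  rw [mul_zero, smul_eq_mul] at hcomp
  simp only [logSeriesTerm_eq]
  rw [integral_const_mul, mul_assoc, hcomp, laplaceIntegral]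

theorem summable_integral_norm_logSeriesTerm (hz : 0 < z) :
    Summable fun n => ∫ w in Ioi 0, ‖logSeriesTerm z n w‖ := by
  simp only [norm_of_nonneg (logSeriesTerm_nonneg z _ _), integral_logSeriesTerm]
  exact (summable_laplaceIntegral_binetTerm hz).mul_left π

theorem ae_hasSum_logSeriesTerm (hz : 0 < z) :
    ∀ᵐ w ∂volume.restrict (Ioi 0), HasSum (fun n => logSeriesTerm z n w)
      (-(log (1 - exp (-(2 * π * z * w))) / (1 + w ^ 2))) :=
  ae_restrict_of_forall_mem measurableSet_Ioi fun _ hw => hasSum_logSeriesTerm hz hw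

theorem integrableOn_log_one_sub_exp_div_one_add_sq (hz : 0 < z) :
    IntegrableOn (fun w => log (1 - exp (-(2 * π * z * w))) / (1 + w ^ 2)) (Ioi 0) :=
  integrable_neg_iff.mp <| integrable_of_hasSum_of_summable_integral_norm
    (integrableOn_logSeriesTerm hz) (summable_integral_norm_logSeriesTerm hz)
    (ae_hasSum_logSeriesTerm hz)

theorem integral_log_one_sub_exp_div_one_add_sq (hz : 0 < z) :
    ∫ w in Ioi 0, log (1 - exp (-(2 * π * z * w))) / (1 + w ^ 2) = -(π * stirlingRemainder z) := by
  have hsum := hasSum_integral_of_hasSum_of_summable_integral_norm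
    (integrableOn_logSeriesTerm hz) (summable_integral_norm_logSeriesTerm hz)
    (ae_hasSum_logSeriesTerm hz)
  simp only [integral_logSeriesTerm, integral_neg] at hsum
  rw [← laplaceIntegral_binetKernel_eq_stirlingRemainder hz,
    ← hsum.unique ((hasSum_laplaceIntegral_binetTerm hz).mul_left π), neg_neg]

end LogIntegral

end

/-- For real `b > 0`, `τ > 0` and `z = τ/(2πb)`, the Lebesgue integral
`∫₀^∞ log(1 − e^{−τv})/(1 + b²v²) dv` converges and
`−(b/π) ∫₀^∞ log(1 − e^{−τv})/(1 + b²v²) dv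
   = log Γ(z) − (z − 1/2) log z + z − (1/2) log(2π)`. -/
theorem stmt19 (b τ : ℝ) (hb : 0 < b) (hτ : 0 < τ) (z : ℝ)
    (hz : z = τ / (2 * Real.pi * b)) :
    IntegrableOn (fun v : ℝ => Real.log (1 - Real.exp (-(τ * v))) / (1 + b ^ 2 * v ^ 2))
      (Set.Ioi 0) ∧
    -(b / Real.pi) *
        ∫ v in Set.Ioi (0 : ℝ), Real.log (1 - Real.exp (-(τ * v))) / (1 + b ^ 2 * v ^ 2)
      = Real.log (Real.Gamma z) - (z - 1 / 2) * Real.log z + z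
        - (1 / 2) * Real.log (2 * Real.pi) := by
  have hz0 : 0 < z := by
    rw [hz]
    positivity
  have hτz (v : ℝ) : τ * v = 2 * Real.pi * z * (b * v) := by
    rw [hz]
    field_simp
  simp only [hτz, ← mul_pow]
  have hint := (integrableOn_Ioi_comp_mul_left_iff _ 0 hb).mpr
    ((mul_zero b).symm ▸ integrableOn_log_one_sub_exp_div_one_add_sq hz0)
  have hval := integral_comp_mul_left_Ioi
    (fun w => Real.log (1 - Real.exp (-(2 * Real.pi * z * w))) / (1 + w ^ 2)) 0 hb
  rw [mul_zero, integral_log_one_sub_exp_div_one_add_sq hz0, smul_eq_mul] at hval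
  refine ⟨hint, ?_⟩
  rw [hval, ← stirlingRemainder]
  field_simp
end
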